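/- arXiv:1707.08706 — 2 statements merged into one kernel-verified Lean document; each statement's English description precedes it below -/
import Mathlib

section
/- Assume A1 and A2 are positive semidefinite with A1 + A2 positive definite, inf h1 < inf H, and inf h2 < inf H. Let x* be a global minimizer of H. Then there exist constants C > 0 and ε > 0 such that for every x with ‖x − x*‖ ≤ ε and every y ∈ ∂H(x), C·‖y‖ ≥ (H(x) − H(x*))^{1/2}; that is, the Kurdyka–Łojasiewicz property holds at x* with exponent θ = 1/2. -/
/-!
At the minimizer `s` of `H` both quadratics are active: if one of them were not, moving towards a
point where the other one lies below `min H` would decrease `H`. Their gradients `u` and `v` at `s`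
do not vanish, since by convexity each of them would otherwise be minimal at `s`. As no direction
decreases both, `‖v‖ • u + ‖u‖ • v = 0`, so in the combination of the two second-order expansions
with weights `‖v‖` and `‖u‖` the linear terms cancel, and `H` grows at least like `‖x - s‖ ^ 2`.
For a subgradient `y` of `H` at `x` this growth combines with
`H x - H s ≤ ⟪y, x - s⟫ ≤ ‖y‖ * ‖x - s‖`.
-/

open Matrix RealInnerProductSpace

open Filter Topology

theorem exists_pos_mul_norm_sq_le {V : Type*} [NormedAddCommGroup V] [NormedSpace ℝ V]
    [ProperSpace V] {q : V → ℝ} (hq : Continuous q) (hsmul : ∀ (c : ℝ) x, q (c • x) = c ^ 2 * q x)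
    (hpos : ∀ x, x ≠ 0 → 0 < q x) : ∃ μ > 0, ∀ x, μ * ‖x‖ ^ 2 ≤ q x := by
  have hzero : q 0 = 0 := by simpa using hsmul 0 0
  obtain ⟨μ, hμ, hsphere⟩ : ∃ μ > 0, ∀ e ∈ Metric.sphere (0 : V) 1, μ ≤ q e :=
    (isCompact_sphere (0 : V) 1).exists_forall_le' hq.continuousOn
      fun e he => hpos e (Metric.ne_of_mem_sphere he one_ne_zero)
  refine ⟨μ, hμ, fun x => ?_⟩
  rcases eq_or_ne x 0 with rfl | hx
  · simp [hzero]
  · have hunit := hsphere (‖x‖⁻¹ • x) (by simp [norm_smul, hx])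
    rw [hsmul, inv_pow, ← div_eq_inv_mul] at hunit
    exact (le_div_iff₀ (pow_pos (norm_pos_iff.2 hx) 2)).1 hunit

section Descent

variable {V : Type*} [AddCommGroup V] [Module ℝ V] {f g : V → ℝ} {x s d : V} {f' g' : ℝ}

theorem eventually_lt_of_hasLineDerivAt {M : ℝ} (hf : HasLineDerivAt ℝ f f' x d)
    (hle : f x ≤ M) (hlt : f x < M ∨ f' < 0) : ∀ᶠ t in 𝓝[>] (0 : ℝ), f (x + t • d) < M := by
  rcases hlt with hlt | hneg
  · have hcont : ContinuousAt (fun t : ℝ => f (x + t • d)) 0 := HasDerivAt.continuousAt hf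
    have hlt₀ : f (x + (0 : ℝ) • d) < M := by rwa [zero_smul, add_zero]
    exact (hcont.eventually_lt_const hlt₀).filter_mono nhdsWithin_le_nhds
  · filter_upwards [hf.tendsto_slope_zero_right.eventually_lt_const hneg, self_mem_nhdsWithin]
      with t hslope ht
    have hdecr := (smul_neg_iff_of_pos_left (inv_pos.2 ht)).1 hslope
    linarith

theorem not_common_descent_of_min_sup (hmin : ∀ x, (f ⊔ g) s ≤ (f ⊔ g) x)
    (hf : HasLineDerivAt ℝ f f' s d) (hg : HasLineDerivAt ℝ g g' s d)
    (hfd : f s < (f ⊔ g) s ∨ f' < 0) (hgd : g s < (f ⊔ g) s ∨ g' < 0) : False := by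
  obtain ⟨t, hft, hgt⟩ := ((eventually_lt_of_hasLineDerivAt hf le_sup_left hfd).and
    (eventually_lt_of_hasLineDerivAt hg le_sup_right hgd)).exists
  exact (hmin (s + t • d)).not_gt (sup_lt_iff.2 ⟨hft, hgt⟩)

end Descent

variable {E : Type*} [NormedAddCommGroup E] [InnerProductSpace ℝ E]
  {f g : E → ℝ} {s u v x y z : E}

/-- The subdifferential of `f` at `x` in the sense of convex analysis: the set of slopes of the
affine minorants of `f` that agree with `f` at `x`. -/
def subdifferential (f : E → ℝ) (x : E) : Set E :=
  {y | ∀ z, f x + ⟪y, z - x⟫ ≤ f z}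

theorem convex_subdifferential (f : E → ℝ) (x : E) : Convex ℝ (subdifferential f x) := by
  intro u hu v hv α β hα hβ hαβ z
  have hu := mul_le_mul_of_nonneg_left (hu z) hα
  have hv := mul_le_mul_of_nonneg_left (hv z) hβ
  obtain rfl : β = 1 - α := by linarith
  simp only [inner_add_left, real_inner_smul_left]
  linarith

theorem subdifferential_subset_of_le (hle : f ≤ g) (hx : f x = g x) :
    subdifferential f x ⊆ subdifferential g x :=
  fun _ hy z => hx ▸ (hy z).trans (hle z)

theorem max_subdifferential_subset (hu : u ∈ subdifferential f x) (hv : v ∈ subdifferential g x) :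
    (if g x < f x then {u}
      else if f x < g x then {v}
      else {y | ∃ α ∈ Set.Icc (0 : ℝ) 1, y = α • u + (1 - α) • v}) ⊆ subdifferential (f ⊔ g) x := by
  have hu_sup (h : g x ≤ f x) : u ∈ subdifferential (f ⊔ g) x :=
    subdifferential_subset_of_le le_sup_left (sup_of_le_left h).symm hu
  have hv_sup (h : f x ≤ g x) : v ∈ subdifferential (f ⊔ g) x :=
    subdifferential_subset_of_le le_sup_right (sup_of_le_right h).symm hv
  split_ifs with hgf hfg
  · exact Set.singleton_subset_iff.2 (hu_sup hgf.le)
  · exact Set.singleton_subset_iff.2 (hv_sup hfg.le)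
  · rintro _ ⟨α, ⟨hα₀, hα₁⟩, rfl⟩
    exact convex_subdifferential _ x (hu_sup (not_lt.1 hfg)) (hv_sup (not_lt.1 hgf)) hα₀
      (sub_nonneg.2 hα₁) (add_sub_cancel α 1)

theorem inner_sub_neg_of_mem_subdifferential (hu : u ∈ subdifferential f x) (hz : f z < f x) :
    ⟪u, z - x⟫ < 0 := by
  linarith [hu z]

theorem ne_zero_of_mem_subdifferential (hu : u ∈ subdifferential f x) (hz : f z < f x) :
    u ≠ 0 := by
  rintro rfl
  simpa only [inner_zero_left, lt_irrefl] using inner_sub_neg_of_mem_subdifferential hu hz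

theorem sqrt_sub_le_of_quadratic_growth {ν : ℝ} (hν : 0 < ν)
    (hgrowth : ν * ‖x - s‖ ^ 2 ≤ f x - f s) (hy : y ∈ subdifferential f x) :
    √(f x - f s) ≤ (√ν)⁻¹ * ‖y‖ := by
  have hsub : f x - f s ≤ ‖y‖ * ‖x - s‖ := by
    have hyx := real_inner_le_norm y (x - s)
    have hys := hy s
    rw [← neg_sub x s, inner_neg_right] at hys
    linarith
  have hdist : √ν * ‖x - s‖ ≤ √(f x - f s) := by
    rw [← Real.sqrt_sq (norm_nonneg (x - s)), ← Real.sqrt_mul hν.le]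
    exact Real.sqrt_le_sqrt hgrowth
  have hnonneg : 0 ≤ f x - f s := le_trans (by positivity) hgrowth
  rw [← div_eq_inv_mul, le_div_iff₀' (Real.sqrt_pos.2 hν)]
  rcases hnonneg.eq_or_lt with hzero | hpos
  · simp [← hzero]
  · refine le_of_mul_le_mul_right ?_ (Real.sqrt_pos.2 hpos)
    calc √ν * √(f x - f s) * √(f x - f s) = √ν * (f x - f s) := by
          rw [mul_assoc, Real.mul_self_sqrt hnonneg]
      _ ≤ √ν * (‖y‖ * ‖x - s‖) := by gcongr
      _ = ‖y‖ * (√ν * ‖x - s‖) := by ring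
      _ ≤ ‖y‖ * √(f x - f s) := by gcongr

theorem left_eq_sup_of_min_sup (hmin : ∀ x, (f ⊔ g) s ≤ (f ⊔ g) x)
    (hf : ∀ d, HasLineDerivAt ℝ f ⟪u, d⟫ s d) (hg : ∀ d, HasLineDerivAt ℝ g ⟪v, d⟫ s d)
    (hv : v ∈ subdifferential g s) (hinf : ∃ z, g z < (f ⊔ g) s) : f s = (f ⊔ g) s := by
  by_contra hne
  have hlt : f s < (f ⊔ g) s := lt_of_le_of_ne le_sup_left hne
  have hactive : (f ⊔ g) s = g s := (max_choice (f s) (g s)).resolve_left (Ne.symm hne)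
  obtain ⟨z, hz⟩ := hinf
  exact not_common_descent_of_min_sup hmin (hf (z - s)) (hg (z - s)) (.inl hlt)
    (.inr (inner_sub_neg_of_mem_subdifferential hv (hactive ▸ hz)))

theorem norm_smul_add_norm_smul_eq_zero (h : ∀ d, ⟪u, d⟫ < 0 → 0 ≤ ⟪v, d⟫) :
    ‖v‖ • u + ‖u‖ • v = 0 := by
  suffices hopp : ⟪u, -v⟫ = ‖u‖ * ‖-v‖ by
    simpa only [norm_neg, smul_neg, eq_neg_iff_add_eq_zero] using inner_eq_norm_mul_iff_real.1 hopp
  by_contra hne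
  have hlt : 0 < ‖u‖ * ‖v‖ + ⟪u, v⟫ := by
    have := lt_of_le_of_ne (real_inner_le_norm u (-v)) hne
    rw [inner_neg_right, norm_neg] at this
    linarith
  have hu : u ≠ 0 := by rintro rfl; simp at hlt
  have hv : v ≠ 0 := by rintro rfl; simp at hlt
  set d := -(‖v‖ • u + ‖u‖ • v) with hd
  have hud : ⟪u, d⟫ = -(‖u‖ * (‖u‖ * ‖v‖ + ⟪u, v⟫)) := by
    simp only [hd, inner_neg_right, inner_add_right, real_inner_smul_right,
      real_inner_self_eq_norm_sq]
    ring
  have hvd : ⟪v, d⟫ = -(‖v‖ * (‖u‖ * ‖v‖ + ⟪u, v⟫)) := by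
    simp only [hd, inner_neg_right, inner_add_right, real_inner_smul_right,
      real_inner_self_eq_norm_sq, real_inner_comm u v]
    ring
  have hud_neg : ⟪u, d⟫ < 0 := hud ▸ neg_neg_of_pos (mul_pos (norm_pos_iff.2 hu) hlt)
  have hvd_neg : ⟪v, d⟫ < 0 := hvd ▸ neg_neg_of_pos (mul_pos (norm_pos_iff.2 hv) hlt)
  exact (h d hud_neg).not_gt hvd_neg

theorem exists_quadratic_growth_sup {p q : E → ℝ} {α β μ : ℝ} (hα : 0 < α) (hβ : 0 < β)
    (hμ : 0 < μ) (hstat : α • u + β • v = 0) (hfs : f s = (f ⊔ g) s) (hgs : g s = (f ⊔ g) s)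
    (hf : ∀ x, f s + ⟪u, x - s⟫ + p (x - s) ≤ f x) (hg : ∀ x, g s + ⟪v, x - s⟫ + q (x - s) ≤ g x)
    (hp : ∀ d, 0 ≤ p d) (hq : ∀ d, 0 ≤ q d) (hpq : ∀ d, μ * ‖d‖ ^ 2 ≤ p d + q d) :
    ∃ ν > 0, ∀ x, ν * ‖x - s‖ ^ 2 ≤ (f ⊔ g) x - (f ⊔ g) s := by
  refine ⟨min α β * μ / (α + β), by positivity, fun x => ?_⟩
  have hcancel : α * ⟪u, x - s⟫ + β * ⟪v, x - s⟫ = 0 := by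
    rw [← real_inner_smul_left, ← real_inner_smul_left, ← inner_add_left, hstat, inner_zero_left]
  have hfx : (f ⊔ g) s + ⟪u, x - s⟫ + p (x - s) ≤ (f ⊔ g) x :=
    hfs ▸ (hf x).trans le_sup_left
  have hgx : (f ⊔ g) s + ⟪v, x - s⟫ + q (x - s) ≤ (f ⊔ g) x :=
    hgs ▸ (hg x).trans le_sup_right
  rw [div_mul_eq_mul_div, div_le_iff₀ (by positivity)]
  calc min α β * μ * ‖x - s‖ ^ 2 = min α β * (μ * ‖x - s‖ ^ 2) := mul_assoc _ _ _
    _ ≤ min α β * (p (x - s) + q (x - s)) := by gcongr; exact hpq _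
    _ = min α β * p (x - s) + min α β * q (x - s) := mul_add _ _ _
    _ ≤ α * p (x - s) + β * q (x - s) := by
      gcongr
      exacts [hp _, min_le_left _ _, hq _, min_le_right _ _]
    _ ≤ ((f ⊔ g) x - (f ⊔ g) s) * (α + β) := by
      linarith [mul_le_mul_of_nonneg_left hfx hα.le, mul_le_mul_of_nonneg_left hgx hβ.le]

section Quadratic

variable {T T₁ T₂ : E →ₗ[ℝ] E} {a a₁ a₂ : E} {r r₁ r₂ : ℝ}

/-- The quadratic function with Hessian `T` (when `T` is symmetric), linear part `a` and constant
term `r`; its gradient at `x` is then `T x + a`. -/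
noncomputable def quadraticFun (T : E →ₗ[ℝ] E) (a : E) (r : ℝ) (x : E) : ℝ :=
  (1 / 2) * ⟪x, T x⟫ + ⟪a, x⟫ + r

theorem quadraticFun_eq_add (hT : T.IsSymmetric) (x z : E) :
    quadraticFun T a r z =
      quadraticFun T a r x + ⟪T x + a, z - x⟫ + (1 / 2) * ⟪z - x, T (z - x)⟫ := by
  have hzx : ⟪z, T x⟫ = ⟪x, T z⟫ := by rw [real_inner_comm, hT x z]
  simp only [quadraticFun, map_sub, inner_sub_left, inner_sub_right, inner_add_left, hT x, hzx]
  ring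

theorem gradient_mem_subdifferential_quadraticFun (hT : T.IsPositive) (x : E) :
    T x + a ∈ subdifferential (quadraticFun T a r) x := fun z => by
  linarith [quadraticFun_eq_add (a := a) (r := r) hT.isSymmetric x z,
    hT.inner_nonneg_right (z - x)]

theorem hasLineDerivAt_quadraticFun (hT : T.IsSymmetric) (x d : E) :
    HasLineDerivAt ℝ (quadraticFun T a r) ⟪T x + a, d⟫ x d := by
  have hline : (fun t : ℝ => quadraticFun T a r (x + t • d)) = fun t : ℝ =>
      quadraticFun T a r x + t * ⟪T x + a, d⟫ + t ^ 2 * ((1 / 2) * ⟪d, T d⟫) := by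
    funext t
    rw [quadraticFun_eq_add hT x, add_sub_cancel_left, map_smul]
    simp only [real_inner_smul_left, real_inner_smul_right]
    ring
  unfold HasLineDerivAt
  rw [hline]
  simpa using (((hasDerivAt_id (0 : ℝ)).mul_const ⟪T x + a, d⟫).const_add
    (quadraticFun T a r x)).fun_add (((hasDerivAt_id (0 : ℝ)).pow 2).mul_const ((1 / 2) * ⟪d, T d⟫))

theorem exists_quadratic_growth_sup_quadraticFun {h₁ h₂ : E → ℝ}
    (hh₁ : h₁ = quadraticFun T₁ a₁ r₁) (hh₂ : h₂ = quadraticFun T₂ a₂ r₂)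
    (hT₁ : T₁.IsPositive) (hT₂ : T₂.IsPositive)
    (hcoercive : ∃ μ > 0, ∀ d, μ * ‖d‖ ^ 2 ≤ ⟪d, (T₁ + T₂) d⟫)
    (hmin : ∀ x, (h₁ ⊔ h₂) s ≤ (h₁ ⊔ h₂) x)
    (hinf₁ : ∃ z, h₁ z < (h₁ ⊔ h₂) s) (hinf₂ : ∃ z, h₂ z < (h₁ ⊔ h₂) s) :
    ∃ ν > 0, ∀ x, ν * ‖x - s‖ ^ 2 ≤ (h₁ ⊔ h₂) x - (h₁ ⊔ h₂) s := by
  have hderiv₁ (d : E) : HasLineDerivAt ℝ h₁ ⟪T₁ s + a₁, d⟫ s d :=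
    hh₁ ▸ hasLineDerivAt_quadraticFun hT₁.isSymmetric s d
  have hderiv₂ (d : E) : HasLineDerivAt ℝ h₂ ⟪T₂ s + a₂, d⟫ s d :=
    hh₂ ▸ hasLineDerivAt_quadraticFun hT₂.isSymmetric s d
  have hmem₁ : T₁ s + a₁ ∈ subdifferential h₁ s :=
    hh₁ ▸ gradient_mem_subdifferential_quadraticFun hT₁ s
  have hmem₂ : T₂ s + a₂ ∈ subdifferential h₂ s :=
    hh₂ ▸ gradient_mem_subdifferential_quadraticFun hT₂ s
  have hactive₁ : h₁ s = (h₁ ⊔ h₂) s := left_eq_sup_of_min_sup hmin hderiv₁ hderiv₂ hmem₂ hinf₂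
  have hactive₂ : h₂ s = (h₁ ⊔ h₂) s := by
    rw [sup_comm h₁ h₂] at hmin hinf₁ ⊢
    exact left_eq_sup_of_min_sup hmin hderiv₂ hderiv₁ hmem₁ hinf₁
  have hne₁ : T₁ s + a₁ ≠ 0 :=
    hinf₁.elim fun _ hz => ne_zero_of_mem_subdifferential hmem₁ (hactive₁ ▸ hz)
  have hne₂ : T₂ s + a₂ ≠ 0 :=
    hinf₂.elim fun _ hz => ne_zero_of_mem_subdifferential hmem₂ (hactive₂ ▸ hz)
  have hstat : ‖T₂ s + a₂‖ • (T₁ s + a₁) + ‖T₁ s + a₁‖ • (T₂ s + a₂) = 0 :=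
    norm_smul_add_norm_smul_eq_zero fun d hd₁ => not_lt.1 fun hd₂ =>
      not_common_descent_of_min_sup hmin (hderiv₁ d) (hderiv₂ d) (.inr hd₁) (.inr hd₂)
  obtain ⟨μ, hμ, hcoercive⟩ := hcoercive
  refine exists_quadratic_growth_sup (p := fun d => (1 / 2) * ⟪d, T₁ d⟫)
    (q := fun d => (1 / 2) * ⟪d, T₂ d⟫) (norm_pos_iff.2 hne₂) (norm_pos_iff.2 hne₁) (half_pos hμ)
    hstat hactive₁ hactive₂ (fun x => ?_) (fun x => ?_)
    (fun d => mul_nonneg one_half_pos.le (hT₁.inner_nonneg_right d))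
    (fun d => mul_nonneg one_half_pos.le (hT₂.inner_nonneg_right d)) fun d => ?_
  · exact hh₁ ▸ (quadraticFun_eq_add hT₁.isSymmetric s x).ge
  · exact hh₂ ▸ (quadraticFun_eq_add hT₂.isSymmetric s x).ge
  · have hd := hcoercive d
    rw [LinearMap.add_apply, inner_add_right] at hd
    linarith

theorem KL_exponent_one_half_general {h₁ h₂ : E → ℝ}
    (hh₁ : h₁ = quadraticFun T₁ a₁ r₁) (hh₂ : h₂ = quadraticFun T₂ a₂ r₂)
    (hT₁ : T₁.IsPositive) (hT₂ : T₂.IsPositive)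
    (hcoercive : ∃ μ > 0, ∀ d, μ * ‖d‖ ^ 2 ≤ ⟪d, (T₁ + T₂) d⟫)
    (hmin : ∀ x, (h₁ ⊔ h₂) s ≤ (h₁ ⊔ h₂) x)
    (hinf₁ : ∃ z, h₁ z < (h₁ ⊔ h₂) s) (hinf₂ : ∃ z, h₂ z < (h₁ ⊔ h₂) s) :
    ∃ C > 0, ∀ x, ∀ y ∈ subdifferential (h₁ ⊔ h₂) x,
      √((h₁ ⊔ h₂) x - (h₁ ⊔ h₂) s) ≤ C * ‖y‖ := by
  obtain ⟨ν, hν, hgrowth⟩ :=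
    exists_quadratic_growth_sup_quadraticFun hh₁ hh₂ hT₁ hT₂ hcoercive hmin hinf₁ hinf₂
  exact ⟨(√ν)⁻¹, inv_pos.2 (Real.sqrt_pos.2 hν),
    fun x _ hy => sqrt_sub_le_of_quadratic_growth hν (hgrowth x) hy⟩

end Quadratic

theorem exists_pos_mul_norm_sq_le_inner_toEuclideanLin {ι : Type*} [Fintype ι] [DecidableEq ι]
    {A : Matrix ι ι ℝ} (hA : A.PosDef) :
    ∃ μ > 0, ∀ x, μ * ‖x‖ ^ 2 ≤ ⟪x, A.toEuclideanLin x⟫ := by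
  have hcont : Continuous A.toEuclideanLin := LinearMap.continuous_of_finiteDimensional _
  refine exists_pos_mul_norm_sq_le (by fun_prop) (fun c x => ?_) fun x hx => ?_
  · rw [map_smul, real_inner_smul_left, real_inner_smul_right]
    ring
  · rw [EuclideanSpace.inner_eq_star_dotProduct, dotProduct_comm]
    simpa using hA.dotProduct_mulVec_pos (x := x.ofLp) (by simpa using hx)

/-- Kurdyka–Łojasiewicz property with exponent 1/2 for `H = max{h1, h2}` at a global
minimizer `x*`, under the assumptions that `A1, A2` are positive semidefinite with
`A1 + A2` positive definite and `min h1 < min H`, `min h2 < min H`. -/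
theorem KL_exponent_one_half
    (n : ℕ) (A1 A2 : Matrix (Fin n) (Fin n) ℝ)
    (hA1s : A1.IsSymm) (hA2s : A2.IsSymm)
    (hA1 : A1.PosSemidef) (hA2 : A2.PosSemidef)
    (hsum : (A1 + A2).PosDef)
    (a1 a2 : EuclideanSpace ℝ (Fin n)) (r1 r2 : ℝ)
    (h1 h2 H : EuclideanSpace ℝ (Fin n) → ℝ)
    (hh1 : ∀ x, h1 x = (1 / 2) * ⟪x, A1.toEuclideanLin x⟫ + ⟪a1, x⟫ + r1)
    (hh2 : ∀ x, h2 x = (1 / 2) * ⟪x, A2.toEuclideanLin x⟫ + ⟪a2, x⟫ + r2)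
    (hH : ∀ x, H x = max (h1 x) (h2 x))
    (grad1 grad2 : EuclideanSpace ℝ (Fin n) → EuclideanSpace ℝ (Fin n))
    (hgrad1 : ∀ x, grad1 x = A1.toEuclideanLin x + a1)
    (hgrad2 : ∀ x, grad2 x = A2.toEuclideanLin x + a2)
    (subdiffH : EuclideanSpace ℝ (Fin n) → Set (EuclideanSpace ℝ (Fin n)))
    (hsub : ∀ x, subdiffH x =
      if h2 x < h1 x then {grad1 x}
      else if h1 x < h2 x then {grad2 x}
      else {g | ∃ α ∈ Set.Icc (0 : ℝ) 1, g = α • grad1 x + (1 - α) • grad2 x})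
    (xstar : EuclideanSpace ℝ (Fin n)) (hmin : ∀ y, H xstar ≤ H y)
    (hinf1 : ∃ x, h1 x < H xstar)
    (hinf2 : ∃ x, h2 x < H xstar) :
    ∃ C > (0 : ℝ), ∃ ε > (0 : ℝ),
      ∀ x : EuclideanSpace ℝ (Fin n), ‖x - xstar‖ ≤ ε →
        ∀ y ∈ subdiffH x, Real.sqrt (H x - H xstar) ≤ C * ‖y‖ := by
  obtain rfl : H = h1 ⊔ h2 := funext hH
  have hT1 := isPositive_toEuclideanLin_iff.2 hA1
  have hT2 := isPositive_toEuclideanLin_iff.2 hA2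
  have hcoercive := exists_pos_mul_norm_sq_le_inner_toEuclideanLin hsum
  rw [map_add] at hcoercive
  obtain rfl : h1 = quadraticFun A1.toEuclideanLin a1 r1 := funext hh1
  obtain rfl : h2 = quadraticFun A2.toEuclideanLin a2 r2 := funext hh2
  obtain ⟨C, hC, hKL⟩ :=
    KL_exponent_one_half_general rfl rfl hT1 hT2 hcoercive hmin hinf1 hinf2
  refine ⟨C, hC, 1, one_pos, fun x _ y hy => hKL x y ?_⟩
  rw [hsub, hgrad1, hgrad2] at hy
  exact max_subdifferential_subset (gradient_mem_subdifferential_quadraticFun hT1 x)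
    (gradient_mem_subdifferential_quadraticFun hT2 x) hy
end

section
/- Let x ∈ ℝⁿ with h1(x) = h2(x), let α ∈ [0, 1], and set g = α·∇h1(x) + (1−α)·∇h2(x). If ∇h1(x)ᵀg = ∇h2(x)ᵀg, then the point x⁺ = x − (1/L)·g satisfies the sufficient descent property H(x) − H(x⁺) ≥ (1/(2L))‖g‖² = (L/2)‖x − x⁺‖². -/
open Matrix RealInnerProductSpace

/-!
Both `h₁` and `h₂` lie below paraboloids of curvature `L` touching them at `x`. Since `g` lies on
the line through the two gradients and has the same inner product with each of them, that inner
product is `⟪g, g⟫ = ‖g‖²`. The step `-(1 / L) g` therefore lowers each paraboloid by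
`‖g‖² / L - ‖g‖² / (2 L)`, and the two functions start from the same value.
-/

section EigenvalueBound

open scoped MatrixOrder ComplexOrder

variable {𝕜 m : Type*} [RCLike 𝕜] [Fintype m] [DecidableEq m] {A : Matrix m m 𝕜} {c : ℝ}

theorem le_algebraMap_of_eigenvalues_le (hA : A.IsHermitian) (hc : ∀ i, hA.eigenvalues i ≤ c) :
    A ≤ algebraMap ℝ (Matrix m m 𝕜) c := by
  refine le_algebraMap_of_spectrum_le (ha := hA.isSelfAdjoint) ?_
  rw [hA.spectrum_real_eq_range_eigenvalues]
  exact Set.forall_mem_range.mpr hc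

theorem re_inner_toEuclideanLin_le_of_eigenvalues_le (hA : A.IsHermitian)
    (hc : ∀ i, hA.eigenvalues i ≤ c) (v : EuclideanSpace 𝕜 m) :
    RCLike.re (inner 𝕜 v (A.toEuclideanLin v)) ≤ c * ‖v‖ ^ 2 := by
  have hpos : (algebraMap ℝ (Matrix m m 𝕜) c - A).toEuclideanLin.IsPositive :=
    isPositive_toEuclideanLin_iff.mpr (le_iff.mp (le_algebraMap_of_eigenvalues_le hA hc))
  have happly : (algebraMap ℝ (Matrix m m 𝕜) c - A).toEuclideanLin v
      = (c : 𝕜) • v - A.toEuclideanLin v := by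
    rw [Algebra.algebraMap_eq_smul_one]
    ext i
    simp [smul_mulVec, RCLike.real_smul_eq_coe_mul]
  have hnonneg := hpos.re_inner_nonneg_right v
  rw [happly, inner_sub_right, inner_smul_right, map_sub, RCLike.re_ofReal_mul,
    inner_self_eq_norm_sq] at hnonneg
  exact sub_nonneg.mp hnonneg

end EigenvalueBound

section QuadraticMajorant

variable {E : Type*} [SeminormedAddCommGroup E] [InnerProductSpace ℝ E]

/-- `f` lies below the paraboloid of curvature `L` that takes the value `f x` and has the gradient
`f'` at `x`. For an `L`-smooth `f` with gradient `f'` at `x` this is the descent lemma. -/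
def HasQuadraticMajorant (f : E → ℝ) (f' : E) (L : ℝ) (x : E) : Prop :=
  ∀ y, f y ≤ f x + ⟪f', y - x⟫ + L / 2 * ‖y - x‖ ^ 2

/-- The quadratic function with Hessian `T` (when `T` is symmetric), linear part `a` and constant
term `r`. -/
noncomputable def quadraticFunction (T : E →ₗ[ℝ] E) (a : E) (r : ℝ) (x : E) : ℝ :=
  (1 / 2) * ⟪x, T x⟫ + ⟪a, x⟫ + r

variable {T : E →ₗ[ℝ] E} {f f₁ f₂ F : E → ℝ} {f' g g₁ g₂ d x xplus : E} {L α : ℝ}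

theorem quadraticFunction_taylor (hT : T.IsSymmetric) (a : E) (r : ℝ) (x y : E) :
    quadraticFunction T a r y = quadraticFunction T a r x + ⟪T x + a, y - x⟫
      + (1 / 2) * ⟪y - x, T (y - x)⟫ := by
  have hsymm : ⟪x, T y⟫ = ⟪T x, y⟫ := (hT x y).symm
  have hcomm (z : E) : ⟪z, T x⟫ = ⟪T x, z⟫ := real_inner_comm _ _
  simp only [quadraticFunction, map_sub, inner_sub_left, inner_sub_right, inner_add_left,
    hsymm, hcomm]
  ring

theorem hasQuadraticMajorant_quadraticFunction (hT : T.IsSymmetric)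
    (hL : ∀ v, ⟪v, T v⟫ ≤ L * ‖v‖ ^ 2) (a : E) (r : ℝ) (x : E) :
    HasQuadraticMajorant (quadraticFunction T a r) (T x + a) L x := by
  intro y
  rw [quadraticFunction_taylor hT a r x y]
  linarith [hL (y - x)]

theorem hasQuadraticMajorant_of_eigenvalues_le {m : Type*} [Fintype m] [DecidableEq m]
    {A : Matrix m m ℝ} (hA : A.IsHermitian) (hL : ∀ i, hA.eigenvalues i ≤ L)
    (a : EuclideanSpace ℝ m) (r : ℝ) (x : EuclideanSpace ℝ m) :
    HasQuadraticMajorant (quadraticFunction A.toEuclideanLin a r) (A.toEuclideanLin x + a) L x :=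
  hasQuadraticMajorant_quadraticFunction (isSymmetric_toEuclideanLin_iff.mpr hA)
    (re_inner_toEuclideanLin_le_of_eigenvalues_le hA hL) a r x

theorem HasQuadraticMajorant.apply_sub_smul_le (hf : HasQuadraticMajorant f f' L x) (hL : 0 < L)
    (hd : ⟪f', d⟫ = ‖d‖ ^ 2) :
    f (x - (1 / L) • d) ≤ f x - 1 / (2 * L) * ‖d‖ ^ 2 := by
  calc f (x - (1 / L) • d)
      ≤ f x + ⟪f', -((1 / L) • d)⟫ + L / 2 * ‖-((1 / L) • d)‖ ^ 2 := by
        simpa only [sub_sub_cancel_left] using hf (x - (1 / L) • d)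
    _ = f x - 1 / L * ‖d‖ ^ 2 + L / 2 * (1 / L * ‖d‖) ^ 2 := by
        rw [inner_neg_right, real_inner_smul_right, hd, norm_neg,
          norm_smul_of_nonneg (by positivity), sub_eq_add_neg]
    _ = f x - 1 / (2 * L) * ‖d‖ ^ 2 := by
        field_simp
        ring

theorem real_inner_eq_norm_sq_of_eq_combination (hg : g = α • g₁ + (1 - α) • g₂)
    (horth : ⟪g₁, g⟫ = ⟪g₂, g⟫) : ⟪g₁, g⟫ = ‖g‖ ^ 2 := by
  calc ⟪g₁, g⟫ = α * ⟪g₁, g⟫ + (1 - α) * ⟪g₂, g⟫ := by rw [← horth]; ring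
    _ = ⟪α • g₁ + (1 - α) • g₂, g⟫ := by
        rw [inner_add_left, real_inner_smul_left, real_inner_smul_left]
    _ = ‖g‖ ^ 2 := by rw [← hg, real_inner_self_eq_norm_sq]

theorem sufficient_descent_kink_general (hF : ∀ y, F y = max (f₁ y) (f₂ y)) (hL : 0 < L)
    (hf₁ : HasQuadraticMajorant f₁ g₁ L x) (hf₂ : HasQuadraticMajorant f₂ g₂ L x)
    (heq : f₁ x = f₂ x) (hg : g = α • g₁ + (1 - α) • g₂) (horth : ⟪g₁, g⟫ = ⟪g₂, g⟫)
    (hxplus : xplus = x - (1 / L) • g) :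
    (1 / (2 * L)) * ‖g‖ ^ 2 = (L / 2) * ‖x - xplus‖ ^ 2 ∧
    (1 / (2 * L)) * ‖g‖ ^ 2 ≤ F x - F xplus := by
  subst hxplus
  have hg₁ : ⟪g₁, g⟫ = ‖g‖ ^ 2 := real_inner_eq_norm_sq_of_eq_combination hg horth
  constructor
  · rw [sub_sub_cancel, norm_smul_of_nonneg (by positivity)]
    field_simp
  · have hdesc₁ := hf₁.apply_sub_smul_le hL hg₁
    have hdesc₂ := hf₂.apply_sub_smul_le hL (horth ▸ hg₁)
    rw [hF, hF, ← heq, max_self, le_sub_comm]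
    exact max_le hdesc₁ (heq ▸ hdesc₂)

end QuadraticMajorant

/-- Sufficient descent at a kink point: if `h1(x) = h2(x)`, `g` is a convex
combination of the gradients with `∇h1(x)ᵀg = ∇h2(x)ᵀg`, then the step
`x⁺ = x - (1/L) g` satisfies `H(x) - H(x⁺) ≥ (1/(2L))‖g‖² = (L/2)‖x - x⁺‖²`. -/
theorem sufficient_descent_kink
    (n : ℕ) [NeZero n] (A1 A2 : Matrix (Fin n) (Fin n) ℝ)
    (hA1s : A1.IsSymm) (hA2s : A2.IsSymm)
    (hA1 : A1.PosSemidef) (hA2 : A2.PosSemidef)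
    (a1 a2 : EuclideanSpace ℝ (Fin n)) (r1 r2 : ℝ)
    (h1 h2 H : EuclideanSpace ℝ (Fin n) → ℝ)
    (hh1 : ∀ x, h1 x = (1 / 2) * ⟪x, A1.toEuclideanLin x⟫ + ⟪a1, x⟫ + r1)
    (hh2 : ∀ x, h2 x = (1 / 2) * ⟪x, A2.toEuclideanLin x⟫ + ⟪a2, x⟫ + r2)
    (hH : ∀ x, H x = max (h1 x) (h2 x))
    (L : ℝ)
    (hL : L = max (⨆ i, hA1.1.eigenvalues i) (⨆ i, hA2.1.eigenvalues i))
    (hLpos : 0 < L)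
    (x : EuclideanSpace ℝ (Fin n)) (heq : h1 x = h2 x)
    (g1 g2 : EuclideanSpace ℝ (Fin n))
    (hg1 : g1 = A1.toEuclideanLin x + a1)
    (hg2 : g2 = A2.toEuclideanLin x + a2)
    (α : ℝ) (hα : α ∈ Set.Icc (0 : ℝ) 1)
    (g : EuclideanSpace ℝ (Fin n)) (hg : g = α • g1 + (1 - α) • g2)
    (horth : ⟪g1, g⟫ = ⟪g2, g⟫)
    (xplus : EuclideanSpace ℝ (Fin n)) (hxplus : xplus = x - (1 / L) • g) :
    (1 / (2 * L)) * ‖g‖ ^ 2 = (L / 2) * ‖x - xplus‖ ^ 2 ∧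
    (1 / (2 * L)) * ‖g‖ ^ 2 ≤ H x - H xplus := by
  obtain rfl : h1 = quadraticFunction A1.toEuclideanLin a1 r1 := funext hh1
  obtain rfl : h2 = quadraticFunction A2.toEuclideanLin a2 r2 := funext hh2
  have hL1 (i : Fin n) : hA1.1.eigenvalues i ≤ L :=
    (Finite.le_ciSup _ i).trans (hL ▸ le_max_left _ _)
  have hL2 (i : Fin n) : hA2.1.eigenvalues i ≤ L :=
    (Finite.le_ciSup _ i).trans (hL ▸ le_max_right _ _)
  exact sufficient_descent_kink_general hH hLpos
    (hg1 ▸ hasQuadraticMajorant_of_eigenvalues_le hA1.1 hL1 a1 r1 x)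
    (hg2 ▸ hasQuadraticMajorant_of_eigenvalues_le hA2.1 hL2 a2 r2 x) heq hg horth hxplus
end
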